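/- (Distance to the optimum from the Newton decrement) Let S ⊆ ℝⁿ be an open convex set, let D be a map from S to real symmetric positive definite n×n matrices satisfying the self-concordance inequality on S, and let r : ℝⁿ → ℝⁿ be differentiable on S with Fréchet derivative D(z) at each z ∈ S. Let y ∈ S, set n(y) := −D(y)⁻¹ r(y) and δ := ‖n(y)‖_{D(y)}, and suppose δ ≤ 1/4, the closed ball {z : ‖z − y‖_{D(y)} ≤ 1} is contained in S, and there exists y* ∈ S with r(y*) = 0. Then ‖y* − y‖_{D(y)} ≤ δ + 3δ² / (1 − δ)³. -/

import Mathlib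

open Matrix

/-- The Hessian norm `‖z‖_H = √(zᵀ H z)` associated with a matrix `H`. -/
noncomputable def hnorm {ι : Type*} [Fintype ι] (H : Matrix ι ι ℝ) (z : ι → ℝ) : ℝ :=
  Real.sqrt (z ⬝ᵥ H.mulVec z)

/-- A matrix-valued map `D` satisfies the self-concordance inequality on `S`. -/
def SelfConcordantOn {n : ℕ} (S : Set (Fin n → ℝ))
    (D : (Fin n → ℝ) → Matrix (Fin n) (Fin n) ℝ) : Prop :=
  ∀ y₁ ∈ S, ∀ y₂ ∈ S, hnorm (D y₁) (y₂ - y₁) < 1 →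
    ∀ v : Fin n → ℝ, hnorm (D y₂) v ≤ hnorm (D y₁) v / (1 - hnorm (D y₁) (y₂ - y₁))

/-!
Put `h = y* - y` and `R = ‖h‖_{D(y)}`. Self-concordance used *backwards*, from `y + t h` to `y`,
gives the lower bound `‖h‖_{D(y + t h)} ≥ R / (1 + t R)`, with no restriction on `R`. Since
`‖h‖²_{D(y + t h)}` is the derivative of `t ↦ ⟨h, r(y + t h)⟩`, integration over `[0, 1]` yields
`⟨h, r(y*) - r(y)⟩ ≥ R² / (1 + R)`. As `r(y*) = 0` and `-r(y) = D(y) n(y)`, the left-hand side is at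
most `R δ` by Cauchy–Schwarz. Hence `R ≤ δ / (1 - δ)`.
-/

section HessianNorm

variable {ι : Type*} [Fintype ι] (H : Matrix ι ι ℝ)

theorem hnorm_nonneg (v : ι → ℝ) : 0 ≤ hnorm H v :=
  Real.sqrt_nonneg _

theorem hnorm_smul (t : ℝ) (v : ι → ℝ) : hnorm H (t • v) = |t| * hnorm H v := by
  have quadratic : (t • v) ⬝ᵥ H *ᵥ (t • v) = t ^ 2 * (v ⬝ᵥ H *ᵥ v) := by
    simp only [mulVec_smul, smul_dotProduct, dotProduct_smul, smul_eq_mul]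
    ring
  rw [hnorm, quadratic, Real.sqrt_mul (sq_nonneg t), Real.sqrt_sq_eq_abs, hnorm]

variable {H}

theorem sq_hnorm (hH : H.PosSemidef) (v : ι → ℝ) : hnorm H v ^ 2 = v ⬝ᵥ H *ᵥ v :=
  Real.sq_sqrt (hH.dotProduct_mulVec_nonneg v)

theorem dotProduct_mulVec_le_hnorm_mul_hnorm (hH : H.PosSemidef) (u v : ι → ℝ) :
    u ⬝ᵥ H *ᵥ v ≤ hnorm H u * hnorm H v := by
  classical
  have hH_symm : H.IsSymm := (conjTranspose_eq_transpose_of_trivial H).symm.trans hH.isHermitian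
  have cauchy_schwarz : (u ⬝ᵥ H *ᵥ v) ^ 2 ≤ (u ⬝ᵥ H *ᵥ u) * (v ⬝ᵥ H *ᵥ v) := by
    simpa only [toBilin'_apply'] using (toBilin' H).apply_sq_le_of_symm
      (fun w ↦ (hH.dotProduct_mulVec_nonneg w).trans_eq (toBilin'_apply' H w w).symm)
      (LinearMap.BilinForm.isSymm_iff.1 (isSymm_toBilin'_iff_isSymm.2 hH_symm)) u v
  rw [← sq_hnorm hH, ← sq_hnorm hH, ← mul_pow] at cauchy_schwarz
  exact le_of_sq_le_sq cauchy_schwarz (mul_nonneg (hnorm_nonneg H u) (hnorm_nonneg H v))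

end HessianNorm

theorem hasDerivWithinAt_dotProduct_comp_add_smul {ι : Type*} [Fintype ι]
    {r : (ι → ℝ) → (ι → ℝ)} {r' : (ι → ℝ) →L[ℝ] (ι → ℝ)} {S : Set (ι → ℝ)} {T : Set ℝ}
    {y h : ι → ℝ} {t : ℝ} (hr : HasFDerivWithinAt r r' S (y + t • h))
    (hT : Set.MapsTo (fun s : ℝ ↦ y + s • h) T S) :
    HasDerivWithinAt (fun s : ℝ ↦ h ⬝ᵥ r (y + s • h)) (h ⬝ᵥ r' h) T t := by
  have hline : HasDerivWithinAt (fun s : ℝ ↦ y + s • h) h T t := by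
    simpa using ((hasDerivWithinAt_id t T).smul_const h).const_add y
  have hcurve : HasDerivWithinAt (fun s : ℝ ↦ r (y + s • h)) (r' h) T t :=
    HasFDerivWithinAt.comp_hasDerivWithinAt (f := fun s : ℝ ↦ y + s • h) t hr hline hT
  exact (dotProductBilin ℝ ℝ h).toContinuousLinearMap.hasFDerivAt.comp_hasDerivWithinAt t hcurve

theorem hasDerivAt_div_one_add_mul {𝕜 : Type*} [NontriviallyNormedField 𝕜] {R t : 𝕜}
    (ht : 1 + t * R ≠ 0) :
    HasDerivAt (fun s : 𝕜 ↦ R / (1 + s * R)) (-(R / (1 + t * R)) ^ 2) t := by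
  have hden : HasDerivAt (fun s : 𝕜 ↦ 1 + s * R) R t := by
    simpa using ((hasDerivAt_id t).mul_const R).const_add 1
  exact ((hasDerivAt_const t R).fun_div hden ht).congr_deriv (by
    rw [zero_mul, zero_sub, div_pow, neg_div, sq R])

namespace SelfConcordantOn

variable {n : ℕ} {S : Set (Fin n → ℝ)} {D : (Fin n → ℝ) → Matrix (Fin n) (Fin n) ℝ}

theorem one_sub_mul_hnorm_le (hSC : SelfConcordantOn S D) {y z : Fin n → ℝ} (hy : y ∈ S)
    (hz : z ∈ S) (v : Fin n → ℝ) :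
    (1 - hnorm (D z) (y - z)) * hnorm (D y) v ≤ hnorm (D z) v := by
  rcases lt_or_ge (hnorm (D z) (y - z)) 1 with hlt | hge
  · rw [mul_comm, ← le_div_iff₀ (sub_pos.2 hlt)]
    exact hSC z hz y hy hlt v
  · exact (mul_nonpos_of_nonpos_of_nonneg (sub_nonpos.2 hge) (hnorm_nonneg _ v)).trans
      (hnorm_nonneg _ v)

theorem hnorm_div_one_add_mul_le (hSC : SelfConcordantOn S D) {y h : Fin n → ℝ} {t : ℝ}
    (ht : 0 ≤ t) (hy : y ∈ S) (hyt : y + t • h ∈ S) :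
    hnorm (D y) h / (1 + t * hnorm (D y) h) ≤ hnorm (D (y + t • h)) h := by
  have hback : hnorm (D (y + t • h)) (y - (y + t • h)) = t * hnorm (D (y + t • h)) h := by
    rw [sub_add_cancel_left, ← neg_smul, hnorm_smul, abs_neg, abs_of_nonneg ht]
  have hcontract := hSC.one_sub_mul_hnorm_le hy hyt h
  rw [hback] at hcontract
  rw [div_le_iff₀ (by linarith [mul_nonneg ht (hnorm_nonneg (D y) h)])]
  linarith

theorem monotoneOn_dotProduct_add_div (hSC : SelfConcordantOn S D)
    (hPSD : ∀ z ∈ S, (D z).PosSemidef) {r : (Fin n → ℝ) → (Fin n → ℝ)}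
    (hr : ∀ z ∈ S, HasFDerivWithinAt r (D z).mulVecLin.toContinuousLinearMap S z)
    {y h : Fin n → ℝ} (hseg : Set.MapsTo (fun t : ℝ ↦ y + t • h) (Set.Icc 0 1) S) :
    MonotoneOn (fun t : ℝ ↦ h ⬝ᵥ r (y + t • h) + hnorm (D y) h / (1 + t * hnorm (D y) h))
      (Set.Icc 0 1) := by
  have hy : y ∈ S := by
    simpa only [zero_smul, add_zero] using hseg (Set.left_mem_Icc.2 zero_le_one)
  set R := hnorm (D y) h
  have hpos : ∀ t ∈ Set.Icc (0 : ℝ) 1, 0 < 1 + t * R := fun t ht ↦ by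
    linarith [mul_nonneg ht.1 (hnorm_nonneg (D y) h)]
  have hderiv : ∀ t ∈ Set.Icc (0 : ℝ) 1,
      HasDerivWithinAt (fun t : ℝ ↦ h ⬝ᵥ r (y + t • h) + R / (1 + t * R))
        (hnorm (D (y + t • h)) h ^ 2 - (R / (1 + t * R)) ^ 2) (Set.Icc 0 1) t := fun t ht ↦ by
    rw [sq_hnorm (hPSD _ (hseg ht)), sub_eq_add_neg]
    exact (hasDerivWithinAt_dotProduct_comp_add_smul (hr _ (hseg ht)) hseg).fun_add
      (hasDerivAt_div_one_add_mul (hpos t ht).ne').hasDerivWithinAt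
  refine monotoneOn_of_hasDerivWithinAt_nonneg (convex_Icc 0 1)
    (fun t ht ↦ (hderiv t ht).continuousWithinAt)
    (fun t ht ↦ (hderiv t (interior_subset ht)).mono interior_subset) fun t ht ↦ ?_
  replace ht := interior_subset ht
  have hlower := hSC.hnorm_div_one_add_mul_le ht.1 hy (hseg ht)
  exact sub_nonneg.2 (pow_le_pow_left₀ (div_nonneg (hnorm_nonneg _ h) (hpos t ht).le) hlower 2)

theorem sq_hnorm_div_one_add_le_dotProduct_sub (hSC : SelfConcordantOn S D)
    (hPSD : ∀ z ∈ S, (D z).PosSemidef) {r : (Fin n → ℝ) → (Fin n → ℝ)}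
    (hr : ∀ z ∈ S, HasFDerivWithinAt r (D z).mulVecLin.toContinuousLinearMap S z)
    {y z : Fin n → ℝ} (hS : StarConvex ℝ y S) (hz : z ∈ S) :
    hnorm (D y) (z - y) ^ 2 / (1 + hnorm (D y) (z - y)) ≤ (z - y) ⬝ᵥ (r z - r y) := by
  have hmono := hSC.monotoneOn_dotProduct_add_div hPSD hr (y := y) (h := z - y)
    (fun t ht ↦ hS.add_smul_sub_mem hz ht.1 ht.2)
    (Set.left_mem_Icc.2 zero_le_one) (Set.right_mem_Icc.2 zero_le_one) zero_le_one
  simp only [zero_smul, add_zero, zero_mul, div_one, one_smul, one_mul,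
    add_sub_cancel] at hmono
  have hsplit : hnorm (D y) (z - y) ^ 2 / (1 + hnorm (D y) (z - y)) =
      hnorm (D y) (z - y) - hnorm (D y) (z - y) / (1 + hnorm (D y) (z - y)) := by
    have hne : 1 + hnorm (D y) (z - y) ≠ 0 := by linarith [hnorm_nonneg (D y) (z - y)]
    field_simp
    ring
  rw [hsplit, dotProduct_sub]
  linarith

end SelfConcordantOn

section OrderedField

variable {𝕜 : Type*} [Field 𝕜] [LinearOrder 𝕜] [IsStrictOrderedRing 𝕜]

theorem le_div_one_sub_of_sq_div_one_add_le {R δ : 𝕜} (hR : 0 ≤ R) (hδ₀ : 0 ≤ δ) (hδ₁ : δ < 1)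
    (h : R ^ 2 / (1 + R) ≤ R * δ) : R ≤ δ / (1 - δ) := by
  rcases hR.eq_or_lt with rfl | hRpos
  · exact div_nonneg hδ₀ (sub_nonneg.2 hδ₁.le)
  · rw [div_le_iff₀ (by linarith), sq, mul_assoc, mul_le_mul_iff_right₀ hRpos] at h
    rw [le_div_iff₀ (sub_pos.2 hδ₁)]
    linarith

theorem div_one_sub_le_add_three_mul_sq_div {δ : 𝕜} (hδ₀ : 0 ≤ δ) (hδ₁ : δ < 1) :
    δ / (1 - δ) ≤ δ + 3 * δ ^ 2 / (1 - δ) ^ 3 := by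
  have hpos : 0 < 1 - δ := sub_pos.2 hδ₁
  calc
    δ / (1 - δ) = δ + δ ^ 2 / (1 - δ) := by field_simp; ring
    _ ≤ δ + 3 * δ ^ 2 / (1 - δ) ^ 3 := by
      gcongr
      · linarith [sq_nonneg δ]
      · exact pow_le_of_le_one hpos.le (by linarith) three_ne_zero

end OrderedField

theorem stmt_5_general {n : ℕ} {S : Set (Fin n → ℝ)}
    {D : (Fin n → ℝ) → Matrix (Fin n) (Fin n) ℝ} (hPSD : ∀ z ∈ S, (D z).PosSemidef)
    (hSC : SelfConcordantOn S D) {r : (Fin n → ℝ) → (Fin n → ℝ)}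
    (hr : ∀ z ∈ S, HasFDerivWithinAt r (D z).mulVecLin.toContinuousLinearMap S z)
    {y ystar : Fin n → ℝ} (hS : StarConvex ℝ y S) (hunit : IsUnit (D y))
    (hδ : hnorm (D y) (-(D y)⁻¹.mulVec (r y)) < 1) (hystar : ystar ∈ S) (hroot : r ystar = 0) :
    hnorm (D y) (ystar - y) ≤
      hnorm (D y) (-(D y)⁻¹.mulVec (r y)) / (1 - hnorm (D y) (-(D y)⁻¹.mulVec (r y))) := by
  refine le_div_one_sub_of_sq_div_one_add_le (hnorm_nonneg _ _) (hnorm_nonneg _ _) hδ ?_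
  have newton_eq : D y *ᵥ -((D y)⁻¹ *ᵥ r y) = r ystar - r y := by
    rw [mulVec_neg, mulVec_mulVec, mul_nonsing_inv _ ((isUnit_iff_isUnit_det _).1 hunit),
      one_mulVec, hroot, zero_sub]
  calc
    hnorm (D y) (ystar - y) ^ 2 / (1 + hnorm (D y) (ystar - y))
        ≤ (ystar - y) ⬝ᵥ (r ystar - r y) :=
      hSC.sq_hnorm_div_one_add_le_dotProduct_sub hPSD hr hS hystar
    _ = (ystar - y) ⬝ᵥ D y *ᵥ -((D y)⁻¹ *ᵥ r y) := by rw [newton_eq]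
    _ ≤ hnorm (D y) (ystar - y) * hnorm (D y) (-((D y)⁻¹ *ᵥ r y)) :=
      dotProduct_mulVec_le_hnorm_mul_hnorm (hPSD y (hS.mem ⟨ystar, hystar⟩)) _ _

/-- Distance to the optimum from the Newton decrement. -/
theorem stmt_5 {n : ℕ} (S : Set (Fin n → ℝ)) (hS : Convex ℝ S) (hopen : IsOpen S)
    (D : (Fin n → ℝ) → Matrix (Fin n) (Fin n) ℝ)
    (hPD : ∀ y ∈ S, (D y).PosDef)
    (hSC : SelfConcordantOn S D)
    (r : (Fin n → ℝ) → (Fin n → ℝ))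
    (hr : ∀ z ∈ S,
      HasFDerivWithinAt r ((D z).mulVecLin.toContinuousLinearMap) S z)
    (y : Fin n → ℝ) (hy : y ∈ S)
    -- `n(y) := −D(y)⁻¹ r(y)`, `δ := ‖n(y)‖_{D(y)}`
    (hδ : hnorm (D y) (-(D y)⁻¹.mulVec (r y)) ≤ 1 / 4)
    (hball : {z : Fin n → ℝ | hnorm (D y) (z - y) ≤ 1} ⊆ S)
    (ystar : Fin n → ℝ) (hystar : ystar ∈ S) (hroot : r ystar = 0) :
    hnorm (D y) (ystar - y) ≤
      hnorm (D y) (-(D y)⁻¹.mulVec (r y)) +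
        3 * (hnorm (D y) (-(D y)⁻¹.mulVec (r y))) ^ 2 /
          (1 - hnorm (D y) (-(D y)⁻¹.mulVec (r y))) ^ 3 := by
  have hδ₁ := hδ.trans_lt (by norm_num : (1 / 4 : ℝ) < 1)
  exact (stmt_5_general (fun z hz ↦ (hPD z hz).posSemidef) hSC hr (hS.starConvex hy)
    (hPD y hy).isUnit hδ₁ hystar hroot).trans
      (div_one_sub_le_add_three_mul_sq_div (hnorm_nonneg _ _) hδ₁)
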